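/- Let E be a real normed vector space, f : E → ℝ and φ : E → E functions of class C² (ContDiff ℝ 2) with f ∘ φ = f, and let x₀ ∈ E satisfy φ x₀ = x₀ and fderiv ℝ f x₀ = 0. Then the Hessian of f at x₀ is invariant under the derivative of the symmetry φ: for all v, w ∈ E, fderiv ℝ (fderiv ℝ f) x₀ (fderiv ℝ φ x₀ v) (fderiv ℝ φ x₀ w) = fderiv ℝ (fderiv ℝ f) x₀ v w. -/

import Mathlib

/-- The Hessian at a fixed critical point is invariant under the derivative of a
symmetry of the function. -/
theorem hessian_invariant_under_symmetry
    {E : Type*} [NormedAddCommGroup E] [NormedSpace ℝ E]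
    (f : E → ℝ) (φ : E → E) (hf : ContDiff ℝ 2 f) (hφ : ContDiff ℝ 2 φ)
    (hsym : f ∘ φ = f) (x₀ : E) (hfix : φ x₀ = x₀) (hcrit : fderiv ℝ f x₀ = 0)
    (v w : E) :
    fderiv ℝ (fderiv ℝ f) x₀ (fderiv ℝ φ x₀ v) (fderiv ℝ φ x₀ w) =
      fderiv ℝ (fderiv ℝ f) x₀ v w := by
  have hfd : Differentiable ℝ f := hf.differentiable (by norm_num)
  have hφd : Differentiable ℝ φ := hφ.differentiable (by norm_num)
  have hf2 : Differentiable ℝ (fderiv ℝ f) :=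
    (hf.fderiv_right (m := 1) (by norm_num)).differentiable (by norm_num)
  have hφ2 : Differentiable ℝ (fderiv ℝ φ) :=
    (hφ.fderiv_right (m := 1) (by norm_num)).differentiable (by norm_num)
  have key : fderiv ℝ f = fun y => (fderiv ℝ f (φ y)).comp (fderiv ℝ φ y) := by
    funext y
    have h := fderiv_comp y (hfd (φ y)) (hφd y)
    rwa [hsym] at h
  have hc : HasFDerivAt (fun y => fderiv ℝ f (φ y))
      ((fderiv ℝ (fderiv ℝ f) (φ x₀)).comp (fderiv ℝ φ x₀)) x₀ :=
    (hf2 (φ x₀)).hasFDerivAt.comp x₀ (hφd x₀).hasFDerivAt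
  have h2 := (hc.clm_comp (hφ2 x₀).hasFDerivAt)
  rw [← key] at h2
  have h3 := congrArg (fun L => L v w) h2.fderiv
  simp [hfix, hcrit] at h3
  exact h3.symm
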